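/- Assume in addition that the pair (W₀Z₀, W₁Z₁) is exchangeable, i.e. (W₀Z₀, W₁Z₁) and (W₁Z₁, W₀Z₀) have the same joint distribution. Then the left derivative of φ at 1 is strictly negative: lim_{q→1⁻} (−φ(q))/(1−q) < 0. -/

import Mathlib

open MeasureTheory ProbabilityTheory Filter

/-- `I_ν = {q : ∫_{|x|≥1} e^{qx} ν(dx) < ∞}`. -/
noncomputable def Inu (ν : Measure ℝ) : Set ℝ :=
  {q : ℝ | ∫⁻ x in {x : ℝ | 1 ≤ |x|}, ENNReal.ofReal (Real.exp (q * x)) ∂ν < ⊤}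

/-- The normalizing drift `a = −σ²/2 − ∫ (e^x − 1 − x 1_{|x|≤1}) ν(dx)`. -/
noncomputable def levyA (σ : ℝ) (ν : Measure ℝ) : ℝ :=
  -σ ^ 2 / 2 - ∫ x, (Real.exp x - 1 - if |x| ≤ 1 then x else 0) ∂ν

/-- `ψ̃(q) = a q + σ² q²/2 + ∫ (e^{qx} − 1 − q x 1_{|x|≤1}) ν(dx)`. -/
noncomputable def psiT (σ : ℝ) (ν : Measure ℝ) (q : ℝ) : ℝ :=
  levyA σ ν * q + σ ^ 2 * q ^ 2 / 2 +
    ∫ x, (Real.exp (q * x) - 1 - q * (if |x| ≤ 1 then x else 0)) ∂ν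

/-- `φ(q) = ψ̃(q) − (q − 1)`. -/
noncomputable def phiF (σ : ℝ) (ν : Measure ℝ) (q : ℝ) : ℝ := psiT σ ν q - (q - 1)

/-!
Write `X = W₀Z₀` and `Y = W₁Z₁`, so that `X + Y = 2Z`. Independence turns the moment formula for the
`Wᵢ` into `E[X^q] + E[Y^q] = 2^φ(q) E[(X + Y)^q]` for `0 < q ≤ 1`. Since `φ(q) → φ(0) = 1` as
`q → 0`, these moments do not always agree, so `min X Y` cannot vanish almost surely. The inequality
`(x + y)^q + (1 - q) min(x, y)^q ≤ x^q + y^q` then bounds `2^φ(q)` below by `1 + (1 - q) k` for some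
`k > 0` that does not depend on `q`, and taking logarithms bounds `φ(q) / (1 - q)` away from zero.
Convexity of `φ` gives the existence of the limit.
-/

open scoped Topology

section RealInequalities

lemma rpow_add_le_rpow_add_mul_rpow {x y p : ℝ} (hy : 0 ≤ y) (hyx : y ≤ x)
    (hp : p ∈ Set.Icc 0 1) : (x + y) ^ p ≤ x ^ p + p * y ^ p := by
  obtain rfl | hy := hy.eq_or_lt
  · simpa using mul_nonneg hp.1 (Real.rpow_nonneg le_rfl p)
  have hx : 0 < x := hy.trans_le hyx
  have bernoulli : (1 + y / x) ^ p ≤ 1 + p * (y / x) :=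
    rpow_one_add_le_one_add_mul_self (by linarith [div_pos hy hx]) hp.1 hp.2
  have antitone : x ^ (p - 1) ≤ y ^ (p - 1) :=
    Real.rpow_le_rpow_of_nonpos hy hyx (by linarith [hp.2])
  calc (x + y) ^ p = x ^ p * (1 + y / x) ^ p := by
        rw [← Real.mul_rpow hx.le (by positivity), mul_add, mul_one, mul_div_cancel₀ y hx.ne']
    _ ≤ x ^ p * (1 + p * (y / x)) := by gcongr
    _ = x ^ p + p * (y * x ^ (p - 1)) := by rw [Real.rpow_sub_one hx.ne']; ring
    _ ≤ x ^ p + p * (y * y ^ (p - 1)) := by have := hp.1; gcongr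
    _ = x ^ p + p * y ^ p := by rw [Real.rpow_sub_one hy.ne', mul_div_cancel₀ _ hy.ne']

lemma rpow_add_add_mul_rpow_min_le {x y p : ℝ} (hx : 0 ≤ x) (hy : 0 ≤ y)
    (hp : p ∈ Set.Icc 0 1) : (x + y) ^ p + (1 - p) * min x y ^ p ≤ x ^ p + y ^ p := by
  obtain hxy | hyx := le_total x y
  · rw [min_eq_left hxy, add_comm x y]
    linarith [rpow_add_le_rpow_add_mul_rpow hx hxy hp]
  · rw [min_eq_right hyx]
    linarith [rpow_add_le_rpow_add_mul_rpow hy hyx hp]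

lemma min_one_le_rpow {x p : ℝ} (hx : 0 ≤ x) (hp : p ∈ Set.Icc 0 1) : min 1 x ≤ x ^ p := by
  obtain h | h := le_total 1 x
  · exact (min_le_left _ _).trans (Real.one_le_rpow h hp.1)
  · exact (min_le_right _ _).trans (Real.self_le_rpow_of_le_one hx h hp.2)

lemma rpow_le_one_add {x p : ℝ} (hx : 0 ≤ x) (hp : p ∈ Set.Icc 0 1) : x ^ p ≤ 1 + x := by
  obtain h | h := le_total 1 x
  · linarith [Real.rpow_le_self_of_one_le h hp.2]
  · linarith [Real.rpow_le_one hx h hp.1]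

lemma mul_logb_one_add_le {b k t s : ℝ} (hb : 1 < b) (hk : 0 ≤ k) (ht : t ∈ Set.Icc 0 1)
    (h : 1 + t * k ≤ b ^ s) : t * Real.logb b (1 + k) ≤ s := by
  have bernoulli : (1 + k) ^ t ≤ 1 + t * k :=
    rpow_one_add_le_one_add_mul_self (by linarith) ht.1 ht.2
  rw [← Real.logb_rpow_eq_mul_logb_of_pos (by positivity),
    Real.logb_le_iff_le_rpow hb (by positivity)]
  exact bernoulli.trans h

lemma exists_tendsto_slope_nhdsLT_of_convexOn {f : ℝ → ℝ} {a b C : ℝ} (hab : a < b)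
    (hf : ConvexOn ℝ (Set.Ioc a b) f) (hC : ∀ x ∈ Set.Ioo a b, slope f b x ≤ C) :
    ∃ L ≤ C, Tendsto (slope f b) (𝓝[<] b) (𝓝 L) := by
  have mono : MonotoneOn (slope f b) (Set.Ioo a b) :=
    (hf.monotoneOn_slope_lt (Set.right_mem_Ioc.2 hab)).mono fun x hx => ⟨⟨hx.1, hx.2.le⟩, hx.2⟩
  have bound : ∀ y ∈ slope f b '' Set.Ioo a b, y ≤ C := Set.forall_mem_image.2 hC
  have nonempty : (Set.Ioo a b).Nonempty := Set.nonempty_Ioo.2 hab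
  exact ⟨sSup (slope f b '' Set.Ioo a b), csSup_le (nonempty.image _) bound,
    mono.tendsto_nhdsWithin_Ioo_left nonempty ⟨C, bound⟩⟩

end RealInequalities

section CompensatedExp

/-- The integrand `e^{qx} − 1 − q x 1_{|x| ≤ 1}` of the Lévy–Khintchine formula for `psiT`. -/
noncomputable def compensatedExp (q x : ℝ) : ℝ :=
  Real.exp (q * x) - 1 - q * (if |x| ≤ 1 then x else 0)

lemma compensatedExp_zero (x : ℝ) : compensatedExp 0 x = 0 := by simp [compensatedExp]

lemma measurable_compensatedExp (q : ℝ) : Measurable (compensatedExp q) := by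
  have : Measurable fun x : ℝ => if |x| ≤ 1 then x else 0 :=
    Measurable.ite (measurableSet_le measurable_id.abs measurable_const) measurable_id
      measurable_const
  unfold compensatedExp
  fun_prop

lemma continuous_compensatedExp_left (x : ℝ) : Continuous fun q => compensatedExp q x := by
  unfold compensatedExp
  fun_prop

lemma convexOn_exp_mul (x : ℝ) : ConvexOn ℝ Set.univ fun q => Real.exp (q * x) :=
  convexOn_exp.comp_linearMap (LinearMap.mulRight ℝ x)

lemma convexOn_compensatedExp (x : ℝ) : ConvexOn ℝ Set.univ fun q => compensatedExp q x :=
  ((convexOn_exp_mul x).sub (concaveOn_const 1 convex_univ)).sub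
    ((LinearMap.mulRight ℝ (if |x| ≤ 1 then x else 0)).concaveOn convex_univ)

lemma neg_min_one_sq_le_compensatedExp (q x : ℝ) : -min 1 (x ^ 2) ≤ compensatedExp q x := by
  unfold compensatedExp
  split_ifs with hx
  · have : 0 ≤ min 1 (x ^ 2) := by positivity
    linarith [Real.add_one_le_exp (q * x)]
  · rw [min_eq_left (one_le_sq_iff_one_le_abs x |>.2 (not_le.1 hx).le)]
    linarith [Real.exp_pos (q * x)]

lemma abs_exp_sub_one_sub_id_le_sq_mul_exp_abs (x : ℝ) :
    |Real.exp x - 1 - x| ≤ x ^ 2 * Real.exp |x| := by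
  have := Complex.norm_exp_sub_sum_le_norm_mul_exp x 2
  simp only [Finset.sum_range_succ, Finset.range_zero, Finset.sum_empty, pow_zero, pow_one,
    Nat.factorial, Nat.cast_one, div_one, zero_add, Complex.norm_real, Real.norm_eq_abs,
    sq_abs, mul_one] at this
  rw [sub_sub]
  exact_mod_cast this

lemma abs_compensatedExp_le (q x : ℝ) :
    |compensatedExp q x| ≤ (1 + q ^ 2 * Real.exp |q|) * min 1 (x ^ 2) +
      {x : ℝ | 1 ≤ |x|}.indicator (fun x => Real.exp (q * x)) x := by
  unfold compensatedExp
  split_ifs with hx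
  · have indicator_nonneg : 0 ≤ {x : ℝ | 1 ≤ |x|}.indicator (fun x => Real.exp (q * x)) x :=
      Set.indicator_nonneg (fun _ _ => (Real.exp_pos _).le) x
    have abs_mul_le : |q * x| ≤ |q| := by
      rw [abs_mul]; exact mul_le_of_le_one_right (abs_nonneg q) hx
    rw [min_eq_right (sq_le_one_iff_abs_le_one x |>.2 hx)]
    calc |Real.exp (q * x) - 1 - q * x| ≤ (q * x) ^ 2 * Real.exp |q * x| :=
          abs_exp_sub_one_sub_id_le_sq_mul_exp_abs _
      _ ≤ (q * x) ^ 2 * Real.exp |q| := by gcongr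
      _ ≤ _ := by linarith [sq_nonneg x, mul_pow q x 2]
  · have hx' : x ∈ {x : ℝ | 1 ≤ |x|} := (not_le.1 hx).le
    rw [Set.indicator_of_mem hx', min_eq_left (one_le_sq_iff_one_le_abs x |>.2 hx'), abs_le]
    have : 0 ≤ q ^ 2 * Real.exp |q| := by positivity
    constructor <;> linarith [Real.exp_pos (q * x)]

end CompensatedExp

section LevyExponent

variable {ν : Measure ℝ}

lemma mem_Inu_iff_integrableOn {q : ℝ} :
    q ∈ Inu ν ↔ IntegrableOn (fun x => Real.exp (q * x)) {x | 1 ≤ |x|} ν := by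
  rw [IntegrableOn, ← lintegral_ofReal_ne_top_iff_integrable (by fun_prop)
    (Eventually.of_forall fun x => (Real.exp_pos _).le), ← lt_top_iff_ne_top]
  rfl

lemma convex_Inu : Convex ℝ (Inu ν) := by
  intro p hp q hq s t hs ht hst
  rw [mem_Inu_iff_integrableOn] at *
  refine ((hp.const_mul s).add (hq.const_mul t)).mono' (by fun_prop) (.of_forall fun x => ?_)
  rw [Real.norm_of_nonneg (Real.exp_pos _).le]
  exact (convexOn_exp_mul x).2 (Set.mem_univ p) (Set.mem_univ q) hs ht hst

lemma integrable_min_one_sq (hν : ∫⁻ x, ENNReal.ofReal (min 1 (x ^ 2)) ∂ν < ⊤) :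
    Integrable (fun x => min 1 (x ^ 2)) ν :=
  (lintegral_ofReal_ne_top_iff_integrable (by fun_prop)
    (.of_forall fun x => by positivity)).1 hν.ne

lemma integrable_compensatedExp (hν : ∫⁻ x, ENNReal.ofReal (min 1 (x ^ 2)) ∂ν < ⊤) {q : ℝ}
    (hq : q ∈ Inu ν) : Integrable (compensatedExp q) ν := by
  have large_jumps : Integrable ({x : ℝ | 1 ≤ |x|}.indicator fun x => Real.exp (q * x)) ν :=
    (integrable_indicator_iff (measurableSet_le measurable_const measurable_id.abs)).2
      (mem_Inu_iff_integrableOn.1 hq)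
  exact (((integrable_min_one_sq hν).const_mul _).add large_jumps).mono'
    (measurable_compensatedExp q).aestronglyMeasurable (.of_forall (abs_compensatedExp_le q))

lemma convexOn_integral_compensatedExp (hν : ∫⁻ x, ENNReal.ofReal (min 1 (x ^ 2)) ∂ν < ⊤) :
    ConvexOn ℝ (Inu ν) fun q => ∫ x, compensatedExp q x ∂ν := by
  refine ⟨convex_Inu, fun p hp q hq s t hs ht hst => ?_⟩
  have hp_int := (integrable_compensatedExp hν hp).const_mul s
  have hq_int := (integrable_compensatedExp hν hq).const_mul t
  simp only [smul_eq_mul]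
  rw [← integral_const_mul, ← integral_const_mul, ← integral_add hp_int hq_int]
  exact integral_mono (integrable_compensatedExp hν (convex_Inu hp hq hs ht hst))
    (hp_int.add hq_int) fun x =>
      (convexOn_compensatedExp x).2 (Set.mem_univ p) (Set.mem_univ q) hs ht hst

lemma continuousOn_integral_compensatedExp
    (hν : ∫⁻ x, ENNReal.ofReal (min 1 (x ^ 2)) ∂ν < ⊤) {a b : ℝ} (ha : a ∈ Inu ν)
    (hb : b ∈ Inu ν) :
    ContinuousOn (fun q => ∫ x, compensatedExp q x ∂ν) (Set.Icc a b) := by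
  -- Convexity in `q` bounds the integrand above by its values at the endpoints.
  refine continuousOn_of_dominated
    (bound := fun x => min 1 (x ^ 2) + (|compensatedExp a x| + |compensatedExp b x|))
    (fun q _ => (measurable_compensatedExp q).aestronglyMeasurable)
    (fun q hq => .of_forall fun x => abs_le.2 ⟨?_, ?_⟩)
    ((integrable_min_one_sq hν).add
      ((integrable_compensatedExp hν ha).abs.add (integrable_compensatedExp hν hb).abs))
    (.of_forall fun x => (continuous_compensatedExp_left x).continuousOn)
  · linarith [neg_min_one_sq_le_compensatedExp q x, abs_nonneg (compensatedExp a x),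
      abs_nonneg (compensatedExp b x)]
  · calc compensatedExp q x ≤ max (compensatedExp a x) (compensatedExp b x) :=
          (convexOn_compensatedExp x).le_max_of_mem_Icc (Set.mem_univ a) (Set.mem_univ b) hq
      _ ≤ max |compensatedExp a x| |compensatedExp b x| :=
          max_le_max (le_abs_self _) (le_abs_self _)
      _ ≤ |compensatedExp a x| + |compensatedExp b x| :=
          max_le_add_of_nonneg (abs_nonneg _) (abs_nonneg _)
      _ ≤ _ := le_add_of_nonneg_left (by positivity)

lemma phiF_eq (σ : ℝ) (ν : Measure ℝ) (q : ℝ) :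
    phiF σ ν q = (levyA σ ν - 1) * q + σ ^ 2 / 2 * q ^ 2 + 1 + ∫ x, compensatedExp q x ∂ν := by
  simp only [phiF, psiT, compensatedExp]
  ring

lemma phiF_zero (σ : ℝ) (ν : Measure ℝ) : phiF σ ν 0 = 1 := by
  simp [phiF_eq, compensatedExp_zero]

lemma phiF_one (σ : ℝ) (ν : Measure ℝ) : phiF σ ν 1 = 0 := by
  simp only [phiF, psiT, levyA, one_mul]
  ring

lemma convexOn_phiF (σ : ℝ) (hν : ∫⁻ x, ENNReal.ofReal (min 1 (x ^ 2)) ∂ν < ⊤) :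
    ConvexOn ℝ (Inu ν) (phiF σ ν) := by
  have linear : ConvexOn ℝ (Inu ν) fun q : ℝ => (levyA σ ν - 1) * q :=
    (LinearMap.mulLeft ℝ (levyA σ ν - 1)).convexOn convex_Inu
  have quadratic : ConvexOn ℝ (Inu ν) fun q : ℝ => σ ^ 2 / 2 * q ^ 2 :=
    ((even_two.convexOn_pow (𝕜 := ℝ)).subset (Set.subset_univ _) convex_Inu).smul (by positivity)
  rw [funext (phiF_eq σ ν)]
  exact ((linear.add quadratic).add_const 1).add (convexOn_integral_compensatedExp hν)

lemma continuousOn_phiF (σ : ℝ) (hν : ∫⁻ x, ENNReal.ofReal (min 1 (x ^ 2)) ∂ν < ⊤) {a b : ℝ}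
    (ha : a ∈ Inu ν) (hb : b ∈ Inu ν) : ContinuousOn (phiF σ ν) (Set.Icc a b) := by
  rw [funext (phiF_eq σ ν)]
  exact (by fun_prop : Continuous fun q : ℝ => (levyA σ ν - 1) * q + σ ^ 2 / 2 * q ^ 2 + 1)
    |>.continuousOn.add (continuousOn_integral_compensatedExp hν ha hb)

lemma exists_mem_Ioo_phiF_ne_zero (σ : ℝ) (hν : ∫⁻ x, ENNReal.ofReal (min 1 (x ^ 2)) ∂ν < ⊤)
    (h0 : 0 ∈ Inu ν) {b : ℝ} (hb : 0 < b) (hb' : b ∈ Inu ν) :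
    ∃ q ∈ Set.Ioo 0 b, phiF σ ν q ≠ 0 := by
  have tendsto_one : Tendsto (phiF σ ν) (𝓝[>] 0) (𝓝 1) := by
    rw [← nhdsWithin_Ioo_eq_nhdsGT hb, ← phiF_zero σ ν]
    exact (continuousOn_phiF σ hν h0 hb' 0 (Set.left_mem_Icc.2 hb.le)).mono_left
      (nhdsWithin_mono _ Set.Ioo_subset_Icc_self)
  obtain ⟨q, hq, hqb⟩ :=
    ((tendsto_one.eventually_ne one_ne_zero).and (Ioo_mem_nhdsGT hb)).exists
  exact ⟨q, hqb, hq⟩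

end LevyExponent

section Moments

variable {Ω : Type*} [MeasurableSpace Ω] {μ : Measure Ω} {X Y : Ω → ℝ} {p : ℝ}

lemma integral_mul_rpow_of_indepFun (hX : AEMeasurable X μ) (hY : AEMeasurable Y μ)
    (hX0 : 0 ≤ᵐ[μ] X) (hY0 : 0 ≤ᵐ[μ] Y) (hXY : IndepFun X Y μ) (p : ℝ) :
    ∫ ω, (X ω * Y ω) ^ p ∂μ = (∫ ω, X ω ^ p ∂μ) * ∫ ω, Y ω ^ p ∂μ := by
  have measurable_rpow : Measurable fun x : ℝ => x ^ p := by fun_prop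
  have indep_rpow : IndepFun (fun ω => X ω ^ p) (fun ω => Y ω ^ p) μ :=
    hXY.comp measurable_rpow measurable_rpow
  rw [← indep_rpow.integral_fun_mul_eq_mul_integral (hX.pow_const p).aestronglyMeasurable
    (hY.pow_const p).aestronglyMeasurable]
  refine integral_congr_ae ?_
  filter_upwards [hX0, hY0] with ω hx hy
  exact Real.mul_rpow hx hy

lemma integral_rpow_eq_of_lintegral (hX : AEMeasurable X μ) (hX0 : 0 ≤ᵐ[μ] X) {c : ℝ} (hc : 0 ≤ c)
    (h : ∫⁻ ω, ENNReal.ofReal (X ω ^ p) ∂μ = ENNReal.ofReal c) : ∫ ω, X ω ^ p ∂μ = c := by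
  rw [integral_eq_lintegral_of_nonneg_ae (hX0.mono fun ω hx => Real.rpow_nonneg hx p)
    (hX.pow_const p).aestronglyMeasurable, h, ENNReal.toReal_ofReal hc]

variable [IsFiniteMeasure μ]

lemma integrable_rpow_of_mem_Icc (hX : Integrable X μ) (hX0 : 0 ≤ᵐ[μ] X) (hp : p ∈ Set.Icc 0 1) :
    Integrable (fun ω => X ω ^ p) μ := by
  refine ((integrable_const 1).add hX).mono' (hX.aemeasurable.pow_const p).aestronglyMeasurable ?_
  filter_upwards [hX0] with ω hx
  rw [Real.norm_of_nonneg (Real.rpow_nonneg hx p)]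
  exact rpow_le_one_add hx hp

lemma integral_rpow_le (hX : Integrable X μ) (hX0 : 0 ≤ᵐ[μ] X) (hp : p ∈ Set.Icc 0 1) :
    ∫ ω, X ω ^ p ∂μ ≤ μ.real Set.univ + ∫ ω, X ω ∂μ := by
  calc ∫ ω, X ω ^ p ∂μ ≤ ∫ ω, (1 + X ω) ∂μ := by
        refine integral_mono_ae (integrable_rpow_of_mem_Icc hX hX0 hp)
          ((integrable_const 1).add hX) ?_
        filter_upwards [hX0] with ω hx
        exact rpow_le_one_add hx hp
    _ = μ.real Set.univ + ∫ ω, X ω ∂μ := by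
        rw [integral_add (integrable_const 1) hX, integral_const, smul_eq_mul, mul_one]

lemma integral_rpow_pos (hX : Integrable X μ) (hX0 : 0 ≤ᵐ[μ] X) (hpos : 0 < ∫ ω, X ω ∂μ)
    (hp : p ∈ Set.Icc 0 1) : 0 < ∫ ω, X ω ^ p ∂μ := by
  have rpow_nonneg : 0 ≤ᵐ[μ] fun ω => X ω ^ p := hX0.mono fun ω hx => Real.rpow_nonneg hx p
  refine (integral_nonneg_of_ae rpow_nonneg).lt_of_ne' fun h => hpos.ne' ?_
  rw [integral_eq_zero_iff_of_nonneg_ae rpow_nonneg (integrable_rpow_of_mem_Icc hX hX0 hp)] at h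
  refine integral_eq_zero_of_ae ?_
  filter_upwards [h, hX0] with ω hω hx
  exact ((Real.rpow_eq_zero_iff_of_nonneg hx).1 hω).1

lemma integrable_min_one_min (hX : Integrable X μ) (hY : Integrable Y μ) :
    Integrable (fun ω => min 1 (min (X ω) (Y ω))) μ :=
  (integrable_const 1).inf (hX.inf hY)

lemma integral_rpow_add_add_mul_le (hX : Integrable X μ) (hY : Integrable Y μ)
    (hX0 : 0 ≤ᵐ[μ] X) (hY0 : 0 ≤ᵐ[μ] Y) (hp : p ∈ Set.Icc 0 1) :
    ∫ ω, (X ω + Y ω) ^ p ∂μ + (1 - p) * ∫ ω, min 1 (min (X ω) (Y ω)) ∂μ ≤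
      ∫ ω, X ω ^ p ∂μ + ∫ ω, Y ω ^ p ∂μ := by
  have sum_nonneg : 0 ≤ᵐ[μ] fun ω => X ω + Y ω := by
    filter_upwards [hX0, hY0] with ω hx hy using add_nonneg hx hy
  have sum_int : Integrable (fun ω => (X ω + Y ω) ^ p) μ :=
    integrable_rpow_of_mem_Icc (hX.add hY) sum_nonneg hp
  have min_int := (integrable_min_one_min hX hY).const_mul (1 - p)
  have X_int := integrable_rpow_of_mem_Icc hX hX0 hp
  have Y_int := integrable_rpow_of_mem_Icc hY hY0 hp
  rw [← integral_const_mul, ← integral_add sum_int min_int, ← integral_add X_int Y_int]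
  refine integral_mono_ae (sum_int.add min_int) (X_int.add Y_int) ?_
  filter_upwards [hX0, hY0] with ω hx hy
  have truncated_le := mul_le_mul_of_nonneg_left (min_one_le_rpow (le_min hx hy) hp)
    (sub_nonneg.2 hp.2)
  exact (add_le_add_right truncated_le _).trans (rpow_add_add_mul_rpow_min_le hx hy hp)

lemma integral_min_one_min_pos (hX : Integrable X μ) (hY : Integrable Y μ)
    (hX0 : 0 ≤ᵐ[μ] X) (hY0 : 0 ≤ᵐ[μ] Y) (hp : p ∈ Set.Ioc 0 1)
    (hne : ∫ ω, (X ω + Y ω) ^ p ∂μ ≠ ∫ ω, X ω ^ p ∂μ + ∫ ω, Y ω ^ p ∂μ) :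
    0 < ∫ ω, min 1 (min (X ω) (Y ω)) ∂μ := by
  have min_nonneg : 0 ≤ᵐ[μ] fun ω => min 1 (min (X ω) (Y ω)) := by
    filter_upwards [hX0, hY0] with ω hx hy using le_min zero_le_one (le_min hx hy)
  refine (integral_nonneg_of_ae min_nonneg).lt_of_ne' fun h => hne ?_
  rw [integral_eq_zero_iff_of_nonneg_ae min_nonneg (integrable_min_one_min hX hY)] at h
  have hp' := Set.Ioc_subset_Icc_self hp
  rw [← integral_add (integrable_rpow_of_mem_Icc hX hX0 hp')
    (integrable_rpow_of_mem_Icc hY hY0 hp')]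
  refine integral_congr_ae ?_
  filter_upwards [h] with ω hω
  obtain hx | hy : X ω = 0 ∨ Y ω = 0 := by
    simp only [Pi.zero_apply] at hω
    grind
  · simp [hx, Real.zero_rpow hp.1.ne']
  · simp [hy, Real.zero_rpow hp.1.ne']

lemma exists_pos_forall_one_add_mul_integral_rpow_add_le (hX : Integrable X μ)
    (hY : Integrable Y μ) (hX0 : 0 ≤ᵐ[μ] X) (hY0 : 0 ≤ᵐ[μ] Y)
    (hpos : 0 < ∫ ω, min 1 (min (X ω) (Y ω)) ∂μ) :
    ∃ k > 0, ∀ p ∈ Set.Icc (0 : ℝ) 1, (1 + (1 - p) * k) * ∫ ω, (X ω + Y ω) ^ p ∂μ ≤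
      ∫ ω, X ω ^ p ∂μ + ∫ ω, Y ω ^ p ∂μ := by
  set c := ∫ ω, min 1 (min (X ω) (Y ω)) ∂μ
  set B := μ.real Set.univ + ∫ ω, X ω + Y ω ∂μ
  have sum_nonneg : 0 ≤ᵐ[μ] fun ω => X ω + Y ω := by
    filter_upwards [hX0, hY0] with ω hx hy using add_nonneg hx hy
  have B_pos : 0 < B := by
    have : NeZero μ := ⟨fun h => hpos.ne' (by simp [c, h])⟩
    exact add_pos_of_pos_of_nonneg measureReal_univ_pos (integral_nonneg_of_ae sum_nonneg)
  refine ⟨c / B, div_pos hpos B_pos, fun p hp => ?_⟩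
  have scaled_le : c / B * ∫ ω, (X ω + Y ω) ^ p ∂μ ≤ c := by
    rw [div_mul_eq_mul_div, div_le_iff₀ B_pos]
    exact mul_le_mul_of_nonneg_left (integral_rpow_le (hX.add hY) sum_nonneg hp) hpos.le
  calc (1 + (1 - p) * (c / B)) * ∫ ω, (X ω + Y ω) ^ p ∂μ
      = ∫ ω, (X ω + Y ω) ^ p ∂μ + (1 - p) * (c / B * ∫ ω, (X ω + Y ω) ^ p ∂μ) := by ring
    _ ≤ ∫ ω, (X ω + Y ω) ^ p ∂μ + (1 - p) * c := by
        have := sub_nonneg.2 hp.2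
        gcongr
    _ ≤ ∫ ω, X ω ^ p ∂μ + ∫ ω, Y ω ^ p ∂μ := integral_rpow_add_add_mul_le hX hY hX0 hY0 hp

theorem exists_tendsto_slope_neg_of_integral_rpow_add {φ : ℝ → ℝ} {b : ℝ} (hb : 1 < b)
    (hφ : ConvexOn ℝ (Set.Ioc 0 1) φ) (hφ1 : φ 1 = 0) (hφ0 : ∃ q ∈ Set.Ioo 0 1, φ q ≠ 0)
    (hX : Integrable X μ) (hY : Integrable Y μ) (hX0 : 0 ≤ᵐ[μ] X) (hY0 : 0 ≤ᵐ[μ] Y)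
    (hpos : ∀ q ∈ Set.Ioo (0 : ℝ) 1, 0 < ∫ ω, (X ω + Y ω) ^ q ∂μ)
    (hmom : ∀ q ∈ Set.Ioo (0 : ℝ) 1, ∫ ω, X ω ^ q ∂μ + ∫ ω, Y ω ^ q ∂μ =
      b ^ φ q * ∫ ω, (X ω + Y ω) ^ q ∂μ) :
    ∃ L < 0, Tendsto (slope φ 1) (𝓝[<] 1) (𝓝 L) := by
  obtain ⟨q₀, hq₀, hφq₀⟩ := hφ0
  have min_pos : 0 < ∫ ω, min 1 (min (X ω) (Y ω)) ∂μ := by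
    refine integral_min_one_min_pos hX hY hX0 hY0 (Set.Ioo_subset_Ioc_self hq₀) fun h => hφq₀ ?_
    rw [hmom q₀ hq₀, eq_comm, mul_eq_right₀ (hpos q₀ hq₀).ne'] at h
    rwa [← Real.rpow_zero b, Real.rpow_right_inj (by positivity) hb.ne'] at h
  obtain ⟨k, k_pos, hk⟩ :=
    exists_pos_forall_one_add_mul_integral_rpow_add_le hX hY hX0 hY0 min_pos
  have slope_le : ∀ q ∈ Set.Ioo (0 : ℝ) 1, slope φ 1 q ≤ -Real.logb b (1 + k) := by
    intro q hq
    have growth : 1 + (1 - q) * k ≤ b ^ φ q :=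
      le_of_mul_le_mul_right ((hk q (Set.Ioo_subset_Icc_self hq)).trans_eq (hmom q hq)) (hpos q hq)
    have := mul_logb_one_add_le hb k_pos.le ⟨by linarith [hq.2], by linarith [hq.1]⟩ growth
    rw [slope_def_field, hφ1, div_le_iff_of_neg (sub_neg.2 hq.2)]
    linarith
  obtain ⟨L, hL, tendsto_L⟩ := exists_tendsto_slope_nhdsLT_of_convexOn zero_lt_one hφ slope_le
  exact ⟨L, hL.trans_lt (neg_lt_zero.2 (Real.logb_pos hb (by linarith))), tendsto_L⟩

end Moments

lemma two_mul_two_rpow_psiT (σ : ℝ) (ν : Measure ℝ) (q : ℝ) :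
    (2 : ℝ) * 2 ^ psiT σ ν q = 2 ^ phiF σ ν q * 2 ^ q := by
  rw [← Real.rpow_add two_pos, phiF, mul_comm, ← Real.rpow_add_one two_ne_zero]
  congr 1
  ring

lemma slope_phiF_one (σ : ℝ) (ν : Measure ℝ) (q : ℝ) :
    slope (phiF σ ν) 1 q = -phiF σ ν q / (1 - q) := by
  rw [slope_def_field, phiF_one, sub_zero, ← neg_sub 1 q, div_neg, neg_div]

theorem stmt_3_general
    {Ω : Type*} [MeasurableSpace Ω] (P : Measure Ω) [IsProbabilityMeasure P]
    (σ : ℝ) (ν : Measure ℝ)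
    (hν2 : ∫⁻ x, ENNReal.ofReal (min 1 (x ^ 2)) ∂ν < ⊤)
    (hIν : Set.Icc (0 : ℝ) 1 ⊆ Inu ν)
    (W Z' : Fin 2 → Ω → ℝ) (Z : Ω → ℝ)
    (hWm : ∀ i, AEMeasurable (W i) P)
    (hW0 : ∀ i, 0 ≤ᵐ[P] W i) (hZ0 : 0 ≤ᵐ[P] Z)
    (hZd : ∀ i, IdentDistrib (Z' i) Z P P)
    (hZint : Integrable Z P) (hZpos : 0 < ∫ ω, Z ω ∂P)
    (hWmom : ∀ i, ∀ q ∈ Set.Ioc (0 : ℝ) 1,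
      ∫⁻ ω, ENNReal.ofReal (W i ω ^ q) ∂P = ENNReal.ofReal ((2 : ℝ) ^ psiT σ ν q))
    (hInd : ∀ i, IndepFun (W i) (Z' i) P)
    (hEq : ∀ᵐ ω ∂P, 2 * Z ω = W 0 ω * Z' 0 ω + W 1 ω * Z' 1 ω) :
    ∃ L : ℝ, L < 0 ∧
      Tendsto (fun q => -phiF σ ν q / (1 - q)) (𝓝[<] 1) (𝓝 L) := by
  have Z'_nonneg (i) : 0 ≤ᵐ[P] Z' i := (hZd i).symm.ae_mem_snd measurableSet_Ici hZ0
  have W_int (i) : Integrable (W i) P := by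
    refine (lintegral_ofReal_ne_top_iff_integrable (hWm i).aestronglyMeasurable (hW0 i)).1 ?_
    simpa using (hWmom i 1 ⟨one_pos, le_rfl⟩).trans_ne ENNReal.ofReal_ne_top
  have WZ'_int (i) : Integrable (fun ω => W i ω * Z' i ω) P :=
    (hInd i).integrable_mul (W_int i) ((hZd i).integrable_iff.2 hZint)
  have WZ'_nonneg (i) : 0 ≤ᵐ[P] fun ω => W i ω * Z' i ω := by
    filter_upwards [hW0 i, Z'_nonneg i] with ω hw hz using mul_nonneg hw hz
  have Z'_moment (i) (q : ℝ) : ∫ ω, Z' i ω ^ q ∂P = ∫ ω, Z ω ^ q ∂P :=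
    ((hZd i).comp (measurable_id.pow_const q)).integral_eq
  have WZ'_moment (i) {q : ℝ} (hq : q ∈ Set.Ioo 0 1) :
      ∫ ω, (W i ω * Z' i ω) ^ q ∂P = 2 ^ psiT σ ν q * ∫ ω, Z ω ^ q ∂P := by
    rw [integral_mul_rpow_of_indepFun (hWm i) (hZd i).aemeasurable_fst (hW0 i) (Z'_nonneg i)
      (hInd i), integral_rpow_eq_of_lintegral (hWm i) (hW0 i) (by positivity)
      (hWmom i q (Set.Ioo_subset_Ioc_self hq)), Z'_moment]
  have sum_moment (q : ℝ) :
      ∫ ω, (W 0 ω * Z' 0 ω + W 1 ω * Z' 1 ω) ^ q ∂P = 2 ^ q * ∫ ω, Z ω ^ q ∂P := by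
    rw [← integral_const_mul]
    refine integral_congr_ae ?_
    filter_upwards [hEq, hZ0] with ω hω hz
    rw [← hω, Real.mul_rpow two_pos.le hz]
  have h0 : (0 : ℝ) ∈ Inu ν := hIν (by simp)
  have h1 : (1 : ℝ) ∈ Inu ν := hIν (by simp)
  obtain ⟨L, hL, tendsto_L⟩ := exists_tendsto_slope_neg_of_integral_rpow_add one_lt_two
    ((convexOn_phiF σ hν2).subset (Set.Ioc_subset_Icc_self.trans hIν) (convex_Ioc 0 1))
    (phiF_one σ ν) (exists_mem_Ioo_phiF_ne_zero σ hν2 h0 one_pos h1)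
    (WZ'_int 0) (WZ'_int 1) (WZ'_nonneg 0) (WZ'_nonneg 1)
    (fun q hq => by
      rw [sum_moment]
      exact mul_pos (by positivity)
        (integral_rpow_pos hZint hZ0 hZpos (Set.Ioo_subset_Icc_self hq)))
    (fun q hq => by
      rw [WZ'_moment 0 hq, WZ'_moment 1 hq, sum_moment, ← mul_assoc, ← two_mul_two_rpow_psiT]
      ring)
  exact ⟨L, hL, tendsto_L.congr (slope_phiF_one σ ν)⟩

/-- If `2Z = W₀Z₀ + W₁Z₁` a.s., with `Z, Z₀, Z₁` identically distributed with positive finite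
mean, `W_i` with moments `E(W_i^q) = 2^{ψ̃(q)}` and independent of `Z_i`, and
`(W₀Z₀, W₁Z₁)` exchangeable, then the left derivative of `φ` at 1,
`lim_{q→1⁻} (−φ(q))/(1−q)`, exists and is strictly negative. -/
theorem stmt_3
    {Ω : Type*} [MeasurableSpace Ω] (P : Measure Ω) [IsProbabilityMeasure P]
    (σ : ℝ) (ν : Measure ℝ)
    (hν0 : ν {0} = 0)
    (hν2 : ∫⁻ x, ENNReal.ofReal (min 1 (x ^ 2)) ∂ν < ⊤)
    (hnz : σ ≠ 0 ∨ ν ≠ 0)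
    (hIν : Set.Icc (0 : ℝ) 1 ⊆ Inu ν)
    (W Z' : Fin 2 → Ω → ℝ) (Z : Ω → ℝ)
    (hWm : ∀ i, Measurable (W i)) (hZ'm : ∀ i, Measurable (Z' i)) (hZm : Measurable Z)
    (hW0 : ∀ i ω, 0 ≤ W i ω) (hZ'0 : ∀ i ω, 0 ≤ Z' i ω) (hZ0 : ∀ ω, 0 ≤ Z ω)
    (hZd : ∀ i, P.map (Z' i) = P.map Z)
    (hZint : Integrable Z P) (hZpos : 0 < ∫ ω, Z ω ∂P)
    (hWmom : ∀ i, ∀ q : ℝ, 0 ≤ q →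
      (q ∈ Inu ν →
        ∫⁻ ω, ENNReal.ofReal (W i ω ^ q) ∂P = ENNReal.ofReal ((2 : ℝ) ^ psiT σ ν q)) ∧
      (q ∉ Inu ν → ∫⁻ ω, ENNReal.ofReal (W i ω ^ q) ∂P = ⊤))
    (hInd : ∀ i, IndepFun (W i) (Z' i) P)
    (hEq : ∀ᵐ ω ∂P, 2 * Z ω = W 0 ω * Z' 0 ω + W 1 ω * Z' 1 ω)
    (hex : P.map (fun ω => (W 0 ω * Z' 0 ω, W 1 ω * Z' 1 ω)) =
           P.map (fun ω => (W 1 ω * Z' 1 ω, W 0 ω * Z' 0 ω))) :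
    ∃ L : ℝ, L < 0 ∧
      Tendsto (fun q => -phiF σ ν q / (1 - q)) (nhdsWithin 1 (Set.Iio 1)) (nhds L) :=
  stmt_3_general P σ ν hν2 hIν W Z' Z (fun i => (hWm i).aemeasurable) (fun i => .of_forall (hW0 i))
    (.of_forall hZ0) (fun i => ⟨(hZ'm i).aemeasurable, hZm.aemeasurable, hZd i⟩) hZint hZpos
    (fun i q hq => (hWmom i q hq.1.le).1 (hIν ⟨hq.1.le, hq.2⟩)) hInd hEq
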